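/- arXiv:nlin/0403023 — 12 statements merged into one kernel-verified Lean document; each statement's English description precedes it below -/
import Mathlib

section
/- Let g be a Lie algebra over a field K with a symmetric invariant bilinear form ⟨·,·⟩ (i.e. ⟨[a,b],c⟩ = ⟨a,[b,c]⟩ for all a,b,c), and let U be a Lie subalgebra of g such that g = U ⊕ U^⊥ as vector spaces, with projection π of g onto U along U^⊥. If L ∈ U and f ∈ g satisfy [f,L] = 0, then [π(f), L] = 0. -/
/-- let `g` be a Lie algebra with a symmetric invariant bilinear form,
`U` a Lie subalgebra with `g = U ⊕ U^⊥` as vector spaces, and `π` the projection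
onto `U` along `U^⊥`. If `L ∈ U` and `⁅f, L⁆ = 0`, then `⁅π f, L⁆ = 0`. -/
theorem stmt2 {K G : Type*} [Field K] [LieRing G] [LieAlgebra K G]
    (B : G →ₗ[K] G →ₗ[K] K)
    (hsymm : ∀ a b : G, B a b = B b a)
    (hinv : ∀ a b c : G, B ⁅a, b⁆ c = B a ⁅b, c⁆)
    (U : LieSubalgebra K G)
    (π : G →ₗ[K] G)
    (hπU : ∀ x : G, π x ∈ U)
    (hπperp : ∀ x : G, ∀ u ∈ U, B (x - π x) u = 0)
    (hdisj : ∀ x ∈ U, (∀ u ∈ U, B x u = 0) → x = 0)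
    (L f : G) (hL : L ∈ U) (hf : ⁅f, L⁆ = 0) :
    ⁅π f, L⁆ = 0 := by
  refine hdisj _ (U.lie_mem (hπU f) hL) fun u hu => ?_
  have h := hπperp f ⁅L, u⁆ (U.lie_mem hL hu)
  rw [map_sub, LinearMap.sub_apply, ← hinv, ← hinv, hf, map_zero, LinearMap.zero_apply,
    zero_sub, neg_eq_zero] at h
  exact h
end

section
/- Let A be an associative unital algebra over a field K with a symmetric bilinear form ⟨·,·⟩ satisfying ⟨a, b⋆c⟩ = ⟨a⋆b, c⟩ for all a,b,c ∈ A, and let U be a Lie subalgebra of the commutator Lie algebra A⁽⁻⁾ such that A = U ⊕ U^⊥ as vector spaces, with projection π of A onto U along U^⊥. Let L ∈ U, let f ∈ A satisfy f⋆L = L⋆f, and let g belong to the unital associative subalgebra of A generated by L together with the center of A. Then [π(f), π(g)] = 0; that is, any two spectral invariants of L commute. -/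
/-- For a symmetric associative form, the commutator with `u` is skew-adjoint. -/
lemma bilin_commutator_left {K A : Type*} [Field K] [Ring A] [Algebra K A]
    (B : A →ₗ[K] A →ₗ[K] K)
    (hsymm : ∀ a b : A, B a b = B b a)
    (hfrob : ∀ a b c : A, B a (b * c) = B (a * b) c) (u x v : A) :
    B (u * x - x * u) v = B x (v * u - u * v) := by
  have h : B (u * x) v = B x (v * u) := by
    rw [hsymm (u * x) v, hfrob, hsymm]
  rw [map_sub, map_sub, LinearMap.sub_apply, h, hfrob x u v]

/-- The orthogonal projection onto a Lie subalgebra `U` maps the centralizer of an element of `U`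
into itself. -/
lemma commute_proj_of_commute {K A : Type*} [Field K] [Ring A] [Algebra K A]
    (B : A →ₗ[K] A →ₗ[K] K)
    (hsymm : ∀ a b : A, B a b = B b a)
    (hfrob : ∀ a b c : A, B a (b * c) = B (a * b) c)
    (U : Submodule K A)
    (hU : ∀ a ∈ U, ∀ b ∈ U, a * b - b * a ∈ U)
    (π : A →ₗ[K] A)
    (hπU : ∀ x : A, π x ∈ U)
    (hπperp : ∀ x : A, ∀ u ∈ U, B (x - π x) u = 0)
    (hdisj : ∀ x ∈ U, (∀ u ∈ U, B x u = 0) → x = 0)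
    {u x : A} (hu : u ∈ U) (hux : Commute u x) : Commute u (π x) := by
  refine sub_eq_zero.mp (hdisj _ (hU u hu _ (hπU x)) fun v hv ↦ ?_)
  have h := hπperp x _ (hU v hv u hu)
  rw [LinearMap.map_sub₂, sub_eq_zero] at h
  rw [bilin_commutator_left B hsymm hfrob, ← h, ← bilin_commutator_left B hsymm hfrob,
    sub_eq_zero.mpr hux.eq, map_zero, LinearMap.zero_apply]

/-- let `A` be an associative unital algebra with a symmetric
semi-Frobenius bilinear form, `U` a Lie subalgebra of the commutator Lie algebra
`A⁽⁻⁾` with `A = U ⊕ U^⊥` as vector spaces and projection `π` onto `U` along `U^⊥`.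
If `L ∈ U`, `f` commutes with `L`, and `g` lies in the unital associative
subalgebra generated by `L` and the center of `A`, then the spectral invariants
`π f` and `π g` commute: `π f * π g - π g * π f = 0`. -/
theorem stmt3 {K A : Type*} [Field K] [Ring A] [Algebra K A]
    (B : A →ₗ[K] A →ₗ[K] K)
    (hsymm : ∀ a b : A, B a b = B b a)
    (hfrob : ∀ a b c : A, B a (b * c) = B (a * b) c)
    (U : Submodule K A)
    (hU : ∀ a ∈ U, ∀ b ∈ U, a * b - b * a ∈ U)
    (π : A →ₗ[K] A)
    (hπU : ∀ x : A, π x ∈ U)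
    (hπperp : ∀ x : A, ∀ u ∈ U, B (x - π x) u = 0)
    (hdisj : ∀ x ∈ U, (∀ u ∈ U, B x u = 0) → x = 0)
    (L f g : A) (hL : L ∈ U) (hf : f * L = L * f)
    (hg : g ∈ Algebra.adjoin K (insert L (Set.center A))) :
    π f * π g - π g * π f = 0 := by
  have proj {u x : A} (hu : u ∈ U) (hux : Commute u x) : Commute u (π x) :=
    commute_proj_of_commute B hsymm hfrob U hU π hπU hπperp hdisj hu hux
  have hLf : Commute L (π f) := proj hL hf.symm
  have hgens : insert L (Set.center A) ⊆ Subalgebra.centralizer K {π f} := by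
    rintro x (rfl | hx)
    · simpa [Set.mem_centralizer_iff] using hLf.eq.symm
    · simpa [Set.mem_centralizer_iff] using (hx.comm (π f)).eq.symm
  have hfg : Commute (π f) g :=
    (Subalgebra.mem_centralizer_iff K).mp (Algebra.adjoin_le hgens hg) _ rfl
  exact sub_eq_zero.mpr (proj (hπU f) hfg)
end

section
/- (Theorem 1) Let U be a Lie algebra over a field K with a symmetric invariant bilinear form ⟨·,·⟩ (i.e. ⟨[a,b],c⟩ = ⟨a,[b,c]⟩). Suppose U = U₊ ⊕ U₋ as vector spaces, where U₊ and U₋ are Lie subalgebras, with projections π₊, π₋. Let I₊ be a Lie ideal of U₊, I₋ a Lie ideal of U₋, and set O = {x ∈ U : ⟨x,y⟩ = 0 for all y ∈ I₊ and all y ∈ I₋}. Then for every L ∈ O and every h ∈ U with [h,L] = 0, the element [π₊(h), L] again belongs to O; in other words, O is invariant under the Lax flow L_t = [π₊(h), L]. -/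
/-- For an invariant form, `ad a` is skew-adjoint, so it preserves the orthogonality of `L` to any
subspace stable under `ad a`. -/
theorem apply_lie_eq_zero_of_stable {K G : Type*} [Field K] [LieRing G] [LieAlgebra K G]
    (B : G →ₗ[K] G →ₗ[K] K) (hinv : ∀ a b c : G, B ⁅a, b⁆ c = B a ⁅b, c⁆)
    {I : Submodule K G} {a L : G} (ha : ∀ y ∈ I, ⁅a, y⁆ ∈ I) (hL : ∀ y ∈ I, B L y = 0) :
    ∀ y ∈ I, B ⁅a, L⁆ y = 0 := by
  intro y hy
  rw [← lie_skew, map_neg, LinearMap.neg_apply, hinv, hL _ (ha y hy), neg_zero]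

/-- Theorem 1: let `U` be a Lie algebra with a symmetric invariant
bilinear form and a vector-space decomposition `U = U₊ ⊕ U₋` into Lie subalgebras,
with projections `π₊`, `π₋`.  Let `I₊ ⊆ U₊`, `I₋ ⊆ U₋` be Lie ideals of `U₊`
and `U₋` respectively, and let `O = I₊^⊥ ∩ I₋^⊥`.  If `L ∈ O` and `⁅h, L⁆ = 0`,
then `⁅π₊ h, L⁆ ∈ O`: the orbit is invariant under the Lax flow. -/
theorem stmt4 {K G : Type*} [Field K] [LieRing G] [LieAlgebra K G]
    (B : G →ₗ[K] G →ₗ[K] K)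
    (hsymm : ∀ a b : G, B a b = B b a)
    (hinv : ∀ a b c : G, B ⁅a, b⁆ c = B a ⁅b, c⁆)
    (Up Um : LieSubalgebra K G)
    (πp πm : G →ₗ[K] G)
    (hπp : ∀ x : G, πp x ∈ Up) (hπm : ∀ x : G, πm x ∈ Um)
    (hdecomp : ∀ x : G, πp x + πm x = x)
    (hdisj : ∀ x : G, x ∈ Up → x ∈ Um → x = 0)
    (Ip Im : Submodule K G)
    (hIpU : (Ip : Set G) ⊆ (Up : Set G)) (hImU : (Im : Set G) ⊆ (Um : Set G))
    (hIp : ∀ a ∈ Up, ∀ y ∈ Ip, ⁅a, y⁆ ∈ Ip)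
    (hIm : ∀ a ∈ Um, ∀ y ∈ Im, ⁅a, y⁆ ∈ Im)
    (L h : G)
    (hL : (∀ y ∈ Ip, B L y = 0) ∧ (∀ y ∈ Im, B L y = 0))
    (hcomm : ⁅h, L⁆ = 0) :
    (∀ y ∈ Ip, B ⁅πp h, L⁆ y = 0) ∧ (∀ y ∈ Im, B ⁅πp h, L⁆ y = 0) := by
  refine ⟨apply_lie_eq_zero_of_stable B hinv (hIp _ (hπp h)) hL.1, fun y hy => ?_⟩
  have hlax : ⁅πp h, L⁆ = -⁅πm h, L⁆ := by
    rw [eq_neg_iff_add_eq_zero, ← add_lie, hdecomp, hcomm]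
  rw [hlax, map_neg, LinearMap.neg_apply,
    apply_lie_eq_zero_of_stable B hinv (hIm _ (hπm h)) hL.2 y hy, neg_zero]
end

section
/- (Theorem 2, algebraic form) Let U be a Lie algebra over a field K which, as a vector space, decomposes as U = U₊ ⊕ U₋, where U₊ and U₋ are Lie subalgebras; let π₊ denote the projection onto U₊ along U₋. Then for all a, b, L ∈ U with [a, b] = 0: [π₊([π₊(b), a]), L] + [π₊(a), [π₊(b), L]] = [π₊([π₊(a), b]), L] + [π₊(b), [π₊(a), L]]. (This expresses that the mixed second derivatives L_{tτ} and L_{τt} along the two Lax flows L_t = [π₊(a), L] and L_τ = [π₊(b), L], with a and b evolving by the same flows, coincide, so the flows commute.) -/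
/-- Zero-curvature equation: if `⁅a, b⁆ = 0`, then `⁅π a, π b⁆ = π ⁅π a, b⁆ - π ⁅π b, a⁆` for the
projection `π` onto one of two complementary Lie subalgebras along the other. -/
theorem lie_proj_proj_of_lie_eq_zero {K G : Type*} [CommRing K] [LieRing G] [LieAlgebra K G]
    {Up Um : LieSubalgebra K G} {π : G →ₗ[K] G}
    (hp : ∀ x : G, π x ∈ Up) (hm : ∀ x : G, x - π x ∈ Um)
    (hdisj : ∀ x : G, x ∈ Up → x ∈ Um → x = 0) {a b : G} (hab : ⁅a, b⁆ = 0) :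
    ⁅π a, π b⁆ = π ⁅π a, b⁆ - π ⁅π b, a⁆ := by
  refine sub_eq_zero.mp (hdisj _ (sub_mem (Up.lie_mem (hp a) (hp b)) (sub_mem (hp _) (hp _))) ?_)
  have key : ⁅π a, π b⁆ - (π ⁅π a, b⁆ - π ⁅π b, a⁆) =
      (⁅π a, b⁆ - π ⁅π a, b⁆) - (⁅π b, a⁆ - π ⁅π b, a⁆) + ⁅a - π a, b - π b⁆ := by
    rw [sub_lie, lie_sub, lie_sub, hab, ← lie_skew (π b) a]
    abel
  rw [key]
  exact add_mem (sub_mem (hm _) (hm _)) (Um.lie_mem (hm a) (hm b))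

/-- Theorem 2, algebraic form: let `U` be a Lie algebra decomposing
as a vector space as `U = U₊ ⊕ U₋` where `U₊`, `U₋` are Lie subalgebras, with
projection `π₊` onto `U₊` along `U₋`.  Then for all `a b L` with `⁅a, b⁆ = 0`:
`⁅π₊⁅π₊ b, a⁆, L⁆ + ⁅π₊ a, ⁅π₊ b, L⁆⁆ = ⁅π₊⁅π₊ a, b⁆, L⁆ + ⁅π₊ b, ⁅π₊ a, L⁆⁆`,
i.e. the two Lax flows commute. -/
theorem stmt6 {K G : Type*} [Field K] [LieRing G] [LieAlgebra K G]
    (Up Um : LieSubalgebra K G)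
    (πp : G →ₗ[K] G)
    (hπp : ∀ x : G, πp x ∈ Up)
    (hπm : ∀ x : G, x - πp x ∈ Um)
    (hdisj : ∀ x : G, x ∈ Up → x ∈ Um → x = 0) :
    ∀ a b L : G, ⁅a, b⁆ = 0 →
      ⁅πp ⁅πp b, a⁆, L⁆ + ⁅πp a, ⁅πp b, L⁆⁆
        = ⁅πp ⁅πp a, b⁆, L⁆ + ⁅πp b, ⁅πp a, L⁆⁆ := by
  intro a b L hab
  have h : πp ⁅πp a, b⁆ = ⁅πp a, πp b⁆ + πp ⁅πp b, a⁆ :=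
    sub_eq_iff_eq_add.mp (lie_proj_proj_of_lie_eq_zero hπp hπm hdisj hab).symm
  rw [h, add_lie, lie_lie]
  abel
end

section
/- (Theorem 3, part i — involutivity) Let U be a Lie algebra over a field K with a symmetric invariant bilinear form ⟨·,·⟩ (i.e. ⟨[a,b],c⟩ = ⟨a,[b,c]⟩). Suppose U = U₊ ⊕ U₋ as vector spaces, where U₊ and U₋ are Lie subalgebras, with projections π₊, π₋. Then for all a, b, L ∈ U with [a, L] = 0 and [b, L] = 0: ⟨[π₊(a), π₊(b)] − [π₋(a), π₋(b)], L⟩ = 0. (This is the vanishing of the Kirillov Poisson bracket of the two Hamiltonians H_a and H_b, so the spectral invariants are in involution.) -/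
/-- Theorem 3, part i — involutivity: let `U` be a Lie algebra with
a symmetric invariant bilinear form, decomposing as a vector space as
`U = U₊ ⊕ U₋` with Lie subalgebras `U₊`, `U₋` and projections `π₊`, `π₋`.
Then for all `a b L` with `⁅a, L⁆ = 0` and `⁅b, L⁆ = 0`:
`⟨⁅π₊ a, π₊ b⁆ − ⁅π₋ a, π₋ b⁆, L⟩ = 0`. -/
theorem stmt7 {K G : Type*} [Field K] [LieRing G] [LieAlgebra K G]
    (B : G →ₗ[K] G →ₗ[K] K)
    (hsymm : ∀ a b : G, B a b = B b a)
    (hinv : ∀ a b c : G, B ⁅a, b⁆ c = B a ⁅b, c⁆)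
    (Up Um : LieSubalgebra K G)
    (πp πm : G →ₗ[K] G)
    (hπp : ∀ x : G, πp x ∈ Up) (hπm : ∀ x : G, πm x ∈ Um)
    (hdecomp : ∀ x : G, πp x + πm x = x)
    (hdisj : ∀ x : G, x ∈ Up → x ∈ Um → x = 0) :
    ∀ a b L : G, ⁅a, L⁆ = 0 → ⁅b, L⁆ = 0 →
      B (⁅πp a, πp b⁆ - ⁅πm a, πm b⁆) L = 0 := by
  intro a b L ha hb
  have key : ⁅πp a, πp b⁆ - ⁅πm a, πm b⁆ = -⁅πp b, a⁆ - ⁅πm a, b⁆ := by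
    have h₁ : ⁅a, πp b⁆ = ⁅πp a, πp b⁆ + ⁅πm a, πp b⁆ := by
      rw [← add_lie, hdecomp]
    have h₂ : ⁅πm a, b⁆ = ⁅πm a, πp b⁆ + ⁅πm a, πm b⁆ := by
      rw [← lie_add, hdecomp]
    rw [lie_skew, h₁, h₂]
    abel
  rw [key, map_sub, map_neg, LinearMap.sub_apply, LinearMap.neg_apply, hinv, hinv, ha, hb]
  simp
end

section
/- (Theorem 3, part ii — Hamiltonian form of the Lax equation) Let U be a Lie algebra over a field K with a symmetric invariant bilinear form ⟨·,·⟩ (i.e. ⟨[a,b],c⟩ = ⟨a,[b,c]⟩). Suppose U = U₊ ⊕ U₋ as vector spaces, where U₊ and U₋ are Lie subalgebras, with projections π₊, π₋. Then for all a, b, L ∈ U with [b, L] = 0: ⟨a, [π₊(b), L]⟩ = ⟨[π₊(a), π₊(b)] − [π₋(a), π₋(b)], L⟩. (This identity shows that the Lax vector field L ↦ [π₊(b), L] is the Hamiltonian vector field of H_b with respect to the Kirillov bracket.) -/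
/-- Theorem 3, part ii — Hamiltonian form of the Lax equation:
let `U` be a Lie algebra with a symmetric invariant bilinear form, decomposing
as a vector space as `U = U₊ ⊕ U₋` with Lie subalgebras `U₊`, `U₋` and
projections `π₊`, `π₋`.  Then for all `a b L` with `⁅b, L⁆ = 0`:
`⟨a, ⁅π₊ b, L⁆⟩ = ⟨⁅π₊ a, π₊ b⁆ − ⁅π₋ a, π₋ b⁆, L⟩`. -/
theorem stmt8 {K G : Type*} [Field K] [LieRing G] [LieAlgebra K G]
    (B : G →ₗ[K] G →ₗ[K] K)
    (hsymm : ∀ a b : G, B a b = B b a)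
    (hinv : ∀ a b c : G, B ⁅a, b⁆ c = B a ⁅b, c⁆)
    (Up Um : LieSubalgebra K G)
    (πp πm : G →ₗ[K] G)
    (hπp : ∀ x : G, πp x ∈ Up) (hπm : ∀ x : G, πm x ∈ Um)
    (hdecomp : ∀ x : G, πp x + πm x = x)
    (hdisj : ∀ x : G, x ∈ Up → x ∈ Um → x = 0) :
    ∀ a b L : G, ⁅b, L⁆ = 0 →
      B a ⁅πp b, L⁆ = B (⁅πp a, πp b⁆ - ⁅πm a, πm b⁆) L := by
  intro a b L hbL
  have hm : ⁅πm b, L⁆ = -⁅πp b, L⁆ := by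
    rw [eq_neg_iff_add_eq_zero, add_comm, ← add_lie, hdecomp, hbL]
  rw [map_sub, LinearMap.sub_apply, hinv, hinv, hm, map_neg, sub_neg_eq_add,
    ← LinearMap.add_apply, ← map_add, hdecomp]
end

section
/- (Theorem 4, parts ii and iii, coefficientwise form) Let g be a Lie algebra over a field K, let (A_k)_{k ≥ 0} be a sequence of linear maps A_k : g → g with A₀ = id, set R = A₁, and let [·,·]₁ : g × g → g be a bilinear map. Suppose that for all X, Y ∈ g and all integers n ≥ 0: Σ_{i+j=n, i,j ≥ 0} [A_i(X), A_j(Y)] = A_n([X,Y]) + A_{n−1}([X,Y]₁), where A_{−1} = 0 (this is the coefficientwise form of the homogeneity condition [A(X), A(Y)] = A([X,Y] + λ[X,Y]₁)). Then: (a) [X,Y]₁ = [R(X), Y] + [X, R(Y)] − R([X,Y]) for all X,Y ∈ g; (b) [·,·]₁ is skew-symmetric; and (c) for every t ∈ K, the bilinear operation (X,Y) ↦ [X,Y] + t·[X,Y]₁ satisfies the Jacobi identity, i.e. [·,·]₁ is a Lie bracket compatible with [·,·]. -/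
/-- The Jacobi identity with left-nested brackets. -/
theorem lie_lie_cyclic_sum {L : Type*} [LieRing L] (x y z : L) :
    ⁅⁅x, y⁆, z⁆ + ⁅⁅y, z⁆, x⁆ + ⁅⁅z, x⁆, y⁆ = 0 := by
  have h := lie_jacobi x y z
  rw [← lie_skew x ⁅y, z⁆, ← lie_skew y ⁅z, x⁆, ← lie_skew z ⁅x, y⁆] at h
  rw [← neg_eq_zero, ← h]
  abel

section DeformedBracket

variable {L : Type*} [LieRing L] {b : L → L → L} {R S : L →+ L}

/-- The mixed Jacobi identity for the first-order deformed bracket. -/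
theorem mixed_jacobi_of_deformed
    (hb : ∀ x y, b x y = ⁅R x, y⁆ + ⁅x, R y⁆ - R ⁅x, y⁆) (x y z : L) :
    (b ⁅x, y⁆ z + ⁅b x y, z⁆) + (b ⁅y, z⁆ x + ⁅b y z, x⁆) + (b ⁅z, x⁆ y + ⁅b z x, y⁆) = 0 := by
  have hR := congrArg R (lie_lie_cyclic_sum x y z)
  simp only [map_add, map_zero] at hR
  simp only [hb, add_lie, sub_lie]
  linear_combination (norm := module) lie_lie_cyclic_sum (R x) y z +
    lie_lie_cyclic_sum x (R y) z + lie_lie_cyclic_sum x y (R z) - hR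

/-- The Jacobi identity for the deformed bracket, given the second-order condition. -/
theorem jacobi_of_deformed
    (hb : ∀ x y, b x y = ⁅R x, y⁆ + ⁅x, R y⁆ - R ⁅x, y⁆)
    (hS : ∀ x y, R (b x y) = ⁅S x, y⁆ + ⁅R x, R y⁆ + ⁅x, S y⁆ - S ⁅x, y⁆) (x y z : L) :
    b (b x y) z + b (b y z) x + b (b z x) y = 0 := by
  have expand (u v w : L) : b (b u v) w =
      ⁅⁅S u, v⁆, w⁆ + ⁅⁅u, S v⁆, w⁆ + ⁅⁅u, v⁆, S w⁆
        + (⁅⁅R u, R v⁆, w⁆ + ⁅⁅R u, v⁆, R w⁆ + ⁅⁅u, R v⁆, R w⁆)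
        - S ⁅⁅u, v⁆, w⁆ - R (b ⁅u, v⁆ w + ⁅b u v, w⁆) := by
    rw [hb (b u v) w, hS u v, map_add, hS ⁅u, v⁆ w, hb u v]
    simp only [add_lie, sub_lie]
    abel
  have hRJ := congrArg R (mixed_jacobi_of_deformed hb x y z)
  have hSJ := congrArg S (lie_lie_cyclic_sum x y z)
  rw [map_add, map_add, map_zero] at hRJ hSJ
  rw [expand x y z, expand y z x, expand z x y]
  linear_combination (norm := module) lie_lie_cyclic_sum (S x) y z +
    lie_lie_cyclic_sum x (S y) z + lie_lie_cyclic_sum x y (S z) +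
    lie_lie_cyclic_sum (R x) (R y) z + lie_lie_cyclic_sum (R x) y (R z) +
    lie_lie_cyclic_sum x (R y) (R z) - hSJ - hRJ

end DeformedBracket

/-- Theorem 4, parts ii and iii, coefficientwise form: let `g` be a
Lie algebra, `(A_k)` a sequence of linear maps with `A₀ = id`, and `[·,·]₁ = br1`
a bilinear map such that for all `X Y` and `n ≥ 0`
`∑_{i+j=n} ⁅A_i X, A_j Y⁆ = A_n ⁅X,Y⁆ + A_{n-1} (br1 X Y)` (with `A_{-1} = 0`).
Then (a) `br1 X Y = ⁅A₁ X, Y⁆ + ⁅X, A₁ Y⁆ − A₁ ⁅X,Y⁆`; (b) `br1` is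
skew-symmetric; (c) for every `t`, `(X,Y) ↦ ⁅X,Y⁆ + t • br1 X Y` satisfies the
Jacobi identity, i.e. `br1` is a Lie bracket compatible with `⁅·,·⁆`. -/
theorem stmt12 {K g : Type*} [Field K] [LieRing g] [LieAlgebra K g]
    (A : ℕ → (g →ₗ[K] g)) (hA0 : A 0 = LinearMap.id)
    (br1 : g →ₗ[K] g →ₗ[K] g)
    (hcond : ∀ (X Y : g) (n : ℕ),
      ∑ i ∈ Finset.range (n + 1), ⁅A i X, A (n - i) Y⁆
        = A n ⁅X, Y⁆ + if n = 0 then 0 else A (n - 1) (br1 X Y)) :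
    (∀ X Y : g, br1 X Y = ⁅A 1 X, Y⁆ + ⁅X, A 1 Y⁆ - A 1 ⁅X, Y⁆) ∧
    (∀ X Y : g, br1 X Y = - br1 Y X) ∧
    (∀ (t : K) (X Y Z : g),
      (⁅(⁅X, Y⁆ + t • br1 X Y), Z⁆ + t • br1 (⁅X, Y⁆ + t • br1 X Y) Z)
        + (⁅(⁅Y, Z⁆ + t • br1 Y Z), X⁆ + t • br1 (⁅Y, Z⁆ + t • br1 Y Z) X)
        + (⁅(⁅Z, X⁆ + t • br1 Z X), Y⁆ + t • br1 (⁅Z, X⁆ + t • br1 Z X) Y) = 0) := by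
  have hb (X Y : g) : br1 X Y = ⁅A 1 X, Y⁆ + ⁅X, A 1 Y⁆ - A 1 ⁅X, Y⁆ := by
    have h := hcond X Y 1
    simp [Finset.sum_range_succ, hA0] at h
    linear_combination (norm := module) -h
  have hS (X Y : g) : A 1 (br1 X Y) =
      ⁅A 2 X, Y⁆ + ⁅A 1 X, A 1 Y⁆ + ⁅X, A 2 Y⁆ - A 2 ⁅X, Y⁆ := by
    have h := hcond X Y 2
    simp [Finset.sum_range_succ, hA0] at h
    linear_combination (norm := module) -h
  refine ⟨hb, fun X Y => ?_, fun t X Y Z => ?_⟩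
  · rw [hb, hb, ← lie_skew (A 1 X) Y, ← lie_skew X (A 1 Y), ← lie_skew X Y, map_neg]
    abel
  · have h₁ := mixed_jacobi_of_deformed (b := fun x y => br1 x y)
      (R := (A 1).toAddMonoidHom) hb X Y Z
    have h₂ := jacobi_of_deformed (b := fun x y => br1 x y)
      (R := (A 1).toAddMonoidHom) (S := (A 2).toAddMonoidHom) hb hS X Y Z
    simp only [add_lie, smul_lie, map_add, map_smul, LinearMap.add_apply, LinearMap.smul_apply]
    linear_combination (norm := module) lie_lie_cyclic_sum X Y Z + t • h₁ + t ^ 2 • h₂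
end

section
/- Let g be a Lie algebra over a field K with a nondegenerate symmetric invariant bilinear form κ (invariance: κ([a,b],c) = κ(a,[b,c])). Let R : g → g be a linear map admitting an adjoint Rᵗ : g → g, i.e. κ(R(x), y) = κ(x, Rᵗ(y)) for all x,y. Define [X,Y]₁ = [R(X), Y] + [X, R(Y)] − R([X,Y]) and X∗Y = [R(X), Y] − [X, Rᵗ(Y)] + Rᵗ([X,Y]). Then for all X, Y, Z ∈ g: κ(X∗Y, Z) = −κ(Y, [X,Z]₁); that is, X∗Y = −(ad₁ X)ᵗ(Y), so the operation ∗ is the coadjoint action of the Lie algebra (g, [·,·]₁) on (g, [·,·]). -/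
/-- let `g` be a Lie algebra with a nondegenerate symmetric
invariant bilinear form `κ`, and `R` a linear map with adjoint `Rᵗ`.  With
`⁅X,Y⁆₁ = ⁅R X, Y⁆ + ⁅X, R Y⁆ − R ⁅X,Y⁆` and
`X∗Y = ⁅R X, Y⁆ − ⁅X, Rᵗ Y⁆ + Rᵗ ⁅X,Y⁆`, one has
`κ (X∗Y) Z = − κ Y ⁅X,Z⁆₁` for all `X Y Z`, i.e. `∗` is the coadjoint action
of `(g, ⁅·,·⁆₁)` on `(g, ⁅·,·⁆)`. -/
theorem stmt13 {K g : Type*} [Field K] [LieRing g] [LieAlgebra K g]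
    (κ : g →ₗ[K] g →ₗ[K] K)
    (hsymm : ∀ a b : g, κ a b = κ b a)
    (hnd : ∀ a : g, (∀ b : g, κ a b = 0) → a = 0)
    (hinv : ∀ a b c : g, κ ⁅a, b⁆ c = κ a ⁅b, c⁆)
    (R Rt : g →ₗ[K] g)
    (hadj : ∀ x y : g, κ (R x) y = κ x (Rt y)) :
    ∀ X Y Z : g,
      κ (⁅R X, Y⁆ - ⁅X, Rt Y⁆ + Rt ⁅X, Y⁆) Z
        = - κ Y (⁅R X, Z⁆ + ⁅X, R Z⁆ - R ⁅X, Z⁆) := by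
  intro X Y Z
  have had : ∀ a b c : g, κ ⁅a, b⁆ c = -κ b ⁅a, c⁆ := fun a b c => by
    rw [← lie_skew, map_neg, LinearMap.neg_apply, hinv]
  have hadj' : ∀ x y : g, κ (Rt x) y = κ x (R y) := fun x y => by
    rw [hsymm, ← hadj, hsymm]
  simp only [map_add, map_sub, LinearMap.add_apply, LinearMap.sub_apply, had, hadj']
  ring
end

section
/- (Steklov–Lyapunov integrable case) Let p, q, r ∈ ℝ. Define polynomials in the variables (M₁, M₂, M₃, γ₁, γ₂, γ₃): H₁ = M₁² + M₂² + M₃² + pM₁γ₁ + qM₂γ₂ + rM₃γ₃ + ¼(q−r)²γ₁² + ¼(p−r)²γ₂² + ¼(p−q)²γ₃², and H₂ = pM₁² + qM₂² + rM₃² + p(q+r)M₁γ₁ + q(p+r)M₂γ₂ + r(p+q)M₃γ₃ + ¼p(q+r)²γ₁² + ¼q(p+r)²γ₂² + ¼r(p+q)²γ₃². Then {H₁, H₂} = 0, where {·,·} is the e(3) Poisson bracket. -/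
open MvPolynomial

/-- The Levi-Civita symbol `ε_{ijk}` on three indices, with `ε₁₂₃ = 1`. -/
def levyCivita (i j k : Fin 3) : ℝ :=
  if (i, j, k) = (0, 1, 2) ∨ (i, j, k) = (1, 2, 0) ∨ (i, j, k) = (2, 0, 1) then 1
  else if (i, j, k) = (0, 2, 1) ∨ (i, j, k) = (2, 1, 0) ∨ (i, j, k) = (1, 0, 2) then -1
  else 0

/-- The variable `Mᵢ` as a polynomial in `(M₁,M₂,M₃,γ₁,γ₂,γ₃)`. -/
noncomputable def Mv (i : Fin 3) : MvPolynomial (Fin 3 ⊕ Fin 3) ℝ := X (Sum.inl i)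

/-- The variable `γᵢ` as a polynomial in `(M₁,M₂,M₃,γ₁,γ₂,γ₃)`. -/
noncomputable def Gv (i : Fin 3) : MvPolynomial (Fin 3 ⊕ Fin 3) ℝ := X (Sum.inr i)

/-- The Poisson bracket of the Lie algebra `e(3)`:
`{F,G} = Σ_{i,j,k} ε_{ijk} (Mₖ ∂F/∂Mᵢ ∂G/∂Mⱼ + γₖ (∂F/∂Mᵢ ∂G/∂γⱼ + ∂F/∂γᵢ ∂G/∂Mⱼ))`. -/
noncomputable def e3Bracket (F G : MvPolynomial (Fin 3 ⊕ Fin 3) ℝ) :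
    MvPolynomial (Fin 3 ⊕ Fin 3) ℝ :=
  ∑ i : Fin 3, ∑ j : Fin 3, ∑ k : Fin 3,
    C (levyCivita i j k) *
      (Mv k * (pderiv (Sum.inl i) F) * (pderiv (Sum.inl j) G)
        + Gv k * ((pderiv (Sum.inl i) F) * (pderiv (Sum.inr j) G)
            + (pderiv (Sum.inr i) F) * (pderiv (Sum.inl j) G)))

/-- The bracket `e3Bracket` with the sum over the Levi-Civita symbol written out. -/
lemma e3Bracket_eq (F G : MvPolynomial (Fin 3 ⊕ Fin 3) ℝ) :
    e3Bracket F G =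
      ∑ k : Fin 3,
        (Mv k * (pderiv (Sum.inl (k + 1)) F * pderiv (Sum.inl (k + 2)) G
            - pderiv (Sum.inl (k + 2)) F * pderiv (Sum.inl (k + 1)) G)
          + Gv k * (pderiv (Sum.inl (k + 1)) F * pderiv (Sum.inr (k + 2)) G
            - pderiv (Sum.inl (k + 2)) F * pderiv (Sum.inr (k + 1)) G
            + pderiv (Sum.inr (k + 1)) F * pderiv (Sum.inl (k + 2)) G
            - pderiv (Sum.inr (k + 2)) F * pderiv (Sum.inl (k + 1)) G)) := by
  have h₁ : (1 : Fin 3) + 1 = 2 := rfl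
  have h₂ : (1 : Fin 3) + 2 = 0 := rfl
  have h₃ : (2 : Fin 3) + 1 = 0 := rfl
  have h₄ : (2 : Fin 3) + 2 = 1 := rfl
  simp only [e3Bracket, Fin.sum_univ_three, levyCivita, zero_add, h₁, h₂, h₃, h₄]
  simp
  ring

lemma pderiv_inl_Mv (i j : Fin 3) :
    pderiv (Sum.inl i) (Mv j) = if j = i then 1 else 0 := by
  simp [Mv, pderiv_X, Pi.single_apply]

lemma pderiv_inr_Mv (i j : Fin 3) : pderiv (Sum.inr i) (Mv j) = 0 := by
  simp [Mv, pderiv_X]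

lemma pderiv_inl_Gv (i j : Fin 3) : pderiv (Sum.inl i) (Gv j) = 0 := by
  simp [Gv, pderiv_X]

lemma pderiv_inr_Gv (i j : Fin 3) :
    pderiv (Sum.inr i) (Gv j) = if j = i then 1 else 0 := by
  simp [Gv, pderiv_X, Pi.single_apply]

/-- A diagonal quadratic form in `M` and `γ`. -/
noncomputable def diagForm (a b c : Fin 3 → ℝ) : MvPolynomial (Fin 3 ⊕ Fin 3) ℝ :=
  ∑ i, (C (a i) * Mv i ^ 2 + C (b i) * Mv i * Gv i + C (c i) * Gv i ^ 2)

lemma pderiv_inl_diagForm (a b c : Fin 3 → ℝ) (i : Fin 3) :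
    pderiv (Sum.inl i) (diagForm a b c) = 2 * C (a i) * Mv i + C (b i) * Gv i := by
  simp only [diagForm, map_sum, map_add, Derivation.leibniz, Derivation.leibniz_pow, pderiv_C,
    pderiv_inl_Mv, pderiv_inl_Gv]
  simp [Finset.sum_add_distrib]
  ring

lemma pderiv_inr_diagForm (a b c : Fin 3 → ℝ) (i : Fin 3) :
    pderiv (Sum.inr i) (diagForm a b c) = C (b i) * Mv i + 2 * C (c i) * Gv i := by
  simp only [diagForm, map_sum, map_add, Derivation.leibniz, Derivation.leibniz_pow, pderiv_C,
    pderiv_inr_Mv, pderiv_inr_Gv]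
  simp [Finset.sum_add_distrib]
  ring

/-- Steklov–Lyapunov integrable case: the quadratic Hamiltonians
`H₁` and `H₂` of the Steklov–Lyapunov top commute with respect to the `e(3)`
Poisson bracket. -/
theorem stmt14 (p q r : ℝ) :
    e3Bracket
      (Mv 0 ^ 2 + Mv 1 ^ 2 + Mv 2 ^ 2
        + C p * Mv 0 * Gv 0 + C q * Mv 1 * Gv 1 + C r * Mv 2 * Gv 2
        + C ((q - r) ^ 2 / 4) * Gv 0 ^ 2 + C ((p - r) ^ 2 / 4) * Gv 1 ^ 2
        + C ((p - q) ^ 2 / 4) * Gv 2 ^ 2)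
      (C p * Mv 0 ^ 2 + C q * Mv 1 ^ 2 + C r * Mv 2 ^ 2
        + C (p * (q + r)) * Mv 0 * Gv 0 + C (q * (p + r)) * Mv 1 * Gv 1
        + C (r * (p + q)) * Mv 2 * Gv 2
        + C (p * (q + r) ^ 2 / 4) * Gv 0 ^ 2 + C (q * (p + r) ^ 2 / 4) * Gv 1 ^ 2
        + C (r * (p + q) ^ 2 / 4) * Gv 2 ^ 2) = 0 := by
  trans e3Bracket
    (diagForm ![1, 1, 1] ![p, q, r] ![(q - r) ^ 2 / 4, (p - r) ^ 2 / 4, (p - q) ^ 2 / 4])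
    (diagForm ![p, q, r] ![p * (q + r), q * (p + r), r * (p + q)]
      ![p * (q + r) ^ 2 / 4, q * (p + r) ^ 2 / 4, r * (p + q) ^ 2 / 4])
  · congr 1 <;> simp [diagForm, Fin.sum_univ_three] <;> ring
  simp only [e3Bracket_eq, pderiv_inl_diagForm, pderiv_inr_diagForm, Fin.sum_univ_three]
  refine MvPolynomial.funext fun x => ?_
  simp
  ring
end

section
/- (Clebsch integrable case) Let p, q, r ∈ ℝ. Define polynomials in the variables (M₁, M₂, M₃, γ₁, γ₂, γ₃): H₁ = M₁² + M₂² + M₃² − (q+r)γ₁² − (p+r)γ₂² − (p+q)γ₃², and H₂ = pM₁² + qM₂² + rM₃² − qr·γ₁² − pr·γ₂² − pq·γ₃². Then {H₁, H₂} = 0, where {·,·} is the e(3) Poisson bracket. -/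
open MvPolynomial

/-- Clebsch integrable case: the quadratic Hamiltonians `H₁` and
`H₂` of the Clebsch case commute with respect to the `e(3)` Poisson bracket. -/
theorem stmt15 (p q r : ℝ) :
    e3Bracket
      (Mv 0 ^ 2 + Mv 1 ^ 2 + Mv 2 ^ 2
        - C (q + r) * Gv 0 ^ 2 - C (p + r) * Gv 1 ^ 2 - C (p + q) * Gv 2 ^ 2)
      (C p * Mv 0 ^ 2 + C q * Mv 1 ^ 2 + C r * Mv 2 ^ 2
        - C (q * r) * Gv 0 ^ 2 - C (p * r) * Gv 1 ^ 2 - C (p * q) * Gv 2 ^ 2) = 0 := by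
  simp [e3Bracket, Fin.sum_univ_three, levyCivita, Mv, Gv, pderiv_X, Pi.single_apply]
  ring
end

section
/- (so(n) generalization of the Steklov–Lyapunov top: conjugated Lax representation) Let R be an associative unital algebra over a commutative ring, and let M, Γ, V, M', Γ' ∈ R. Then the identity λ⁻²M' + λ⁻¹Γ' = (1 + λV)·(λ⁻¹M)·(λ⁻²M + λ⁻¹Γ) − (λ⁻²M + λ⁻¹Γ)·(λ⁻¹M)·(1 + λV) holds in the Laurent polynomial ring R[λ, λ⁻¹] if and only if M' = [V, M²] + [M, Γ] and Γ' = VMΓ − ΓMV, where [a,b] = ab − ba. (This identity is the Lax equation L_t = [A, L] with L = (1+λV)^{−1/2}(λ⁻²M + λ⁻¹Γ)(1+λV)^{−1/2} and A = (1+λV)^{1/2}(λ⁻¹M)(1+λV)^{1/2}, conjugated by (1+λV)^{1/2}.) -/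
open LaurentPolynomial

namespace LaurentPolynomial

theorem T_mul_C_eq_single {R : Type*} [Semiring R] (n : ℤ) (a : R) :
    (T n * C a : R[T;T⁻¹]) = AddMonoidAlgebra.single n a := by
  rw [T_mul, ← single_eq_C_mul_T]

theorem single_add_single_inj {R : Type*} [Semiring R] {m n : ℤ} (hmn : m ≠ n) {a b c d : R} :
    (AddMonoidAlgebra.single m a + AddMonoidAlgebra.single n b : R[T;T⁻¹])
      = AddMonoidAlgebra.single m c + AddMonoidAlgebra.single n d ↔ a = c ∧ b = d := by
  refine ⟨fun h => ⟨?_, ?_⟩, fun ⟨hac, hbd⟩ => by rw [hac, hbd]⟩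
  · simpa [-single_eq_C_mul_T, Finsupp.single_apply, hmn, hmn.symm]
      using congrArg (fun p => p.coeff m) h
  · simpa [-single_eq_C_mul_T, Finsupp.single_apply, hmn, hmn.symm]
      using congrArg (fun p => p.coeff n) h

end LaurentPolynomial

/-- so(n) generalization of the Steklov–Lyapunov top, conjugated
Lax representation: in the Laurent polynomial ring `R[λ, λ⁻¹]` over an
associative unital algebra `R`, the identity
`λ⁻²M' + λ⁻¹Γ' = (1 + λV)(λ⁻¹M)(λ⁻²M + λ⁻¹Γ) − (λ⁻²M + λ⁻¹Γ)(λ⁻¹M)(1 + λV)`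
holds iff `M' = [V, M²] + [M, Γ]` and `Γ' = VMΓ − ΓMV`. -/
theorem stmt17 {S R : Type*} [CommRing S] [Ring R] [Algebra S R]
    (M Γ V M' Γ' : R) :
    (T (-2) * LaurentPolynomial.C M' + T (-1) * LaurentPolynomial.C Γ'
      = (1 + T 1 * LaurentPolynomial.C V)
          * (T (-1) * LaurentPolynomial.C M)
          * (T (-2) * LaurentPolynomial.C M + T (-1) * LaurentPolynomial.C Γ)
        - (T (-2) * LaurentPolynomial.C M + T (-1) * LaurentPolynomial.C Γ)
          * (T (-1) * LaurentPolynomial.C M)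
          * (1 + T 1 * LaurentPolynomial.C V))
    ↔ (M' = (V * M ^ 2 - M ^ 2 * V) + (M * Γ - Γ * M)
        ∧ Γ' = V * M * Γ - Γ * M * V) := by
  rw [← single_add_single_inj (show (-2 : ℤ) ≠ -1 by decide)]
  simp only [T_mul_C_eq_single]
  refine Eq.congr_right ?_
  simp only [AddMonoidAlgebra.single_add, AddMonoidAlgebra.single_sub, add_mul, mul_add, one_mul,
    mul_one, AddMonoidAlgebra.single_mul_single, pow_two, mul_assoc]
  norm_num
  abel
end

section
/- (Reductions of system (5.6)) Let u, v, w, r be n×n matrices over a commutative ring, and define u' = uwr − rwu, v' = [u, w] + vwr − rwv, w' = [w, wr + rw − v], where [a,b] = ab − ba. Then: (i) if rᵀ = r, uᵀ = −u, vᵀ = −v and wᵀ = −w, then (u')ᵀ = −u', (v')ᵀ = −v' and (w')ᵀ = −w' (the skew-symmetric reduction is preserved); and (ii) if rᵀ = −r, vᵀ = −v, uᵀ = u and wᵀ = w, then (u')ᵀ = u', (w')ᵀ = w' and (v')ᵀ = −v' (the mixed symmetric/skew-symmetric reduction is preserved). -/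
open Matrix

/-- Reductions of system (5.6): with
`u' = uwr − rwu`, `v' = [u,w] + vwr − rwv`, `w' = [w, wr + rw − v]` for `n×n`
matrices over a commutative ring, (i) if `r` is symmetric and `u, v, w` are
skew-symmetric then `u', v', w'` are skew-symmetric, and (ii) if `r, v` are
skew-symmetric and `u, w` are symmetric then `u', w'` are symmetric and `v'`
is skew-symmetric. -/
theorem stmt18 {S : Type*} [CommRing S] {n : ℕ}
    (u v w r : Matrix (Fin n) (Fin n) S) :
    ((rᵀ = r ∧ uᵀ = -u ∧ vᵀ = -v ∧ wᵀ = -w) →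
      ((u * w * r - r * w * u)ᵀ = -(u * w * r - r * w * u)
        ∧ ((u * w - w * u) + v * w * r - r * w * v)ᵀ
            = -((u * w - w * u) + v * w * r - r * w * v)
        ∧ (w * (w * r + r * w - v) - (w * r + r * w - v) * w)ᵀ
            = -(w * (w * r + r * w - v) - (w * r + r * w - v) * w))) ∧
    ((rᵀ = -r ∧ vᵀ = -v ∧ uᵀ = u ∧ wᵀ = w) →
      ((u * w * r - r * w * u)ᵀ = u * w * r - r * w * u
        ∧ (w * (w * r + r * w - v) - (w * r + r * w - v) * w)ᵀ
            = w * (w * r + r * w - v) - (w * r + r * w - v) * w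
        ∧ ((u * w - w * u) + v * w * r - r * w * v)ᵀ
            = -((u * w - w * u) + v * w * r - r * w * v))) := by
  constructor
  · rintro ⟨hr, hu, hv, hw⟩
    refine ⟨?_, ?_, ?_⟩ <;>
      simp only [transpose_sub, transpose_add, transpose_mul, hr, hu, hv, hw] <;> noncomm_ring
  · rintro ⟨hr, hv, hu, hw⟩
    refine ⟨?_, ?_, ?_⟩ <;>
      simp only [transpose_sub, transpose_add, transpose_mul, hr, hu, hv, hw] <;> noncomm_ring
end
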